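/- Let h_0,…,h_{2n−1} ∈ K, let H = (h_{i+j−2})_{1≤i,j≤n} and H_A = (h_{i+j−1})_{1≤i,j≤n}, and assume det H ≠ 0 and det H_A ≠ 0. Let D ∈ K[X_0,…,X_{2n−1}] be the determinant of the Hankel matrix (X_{i+j−2}) and D_A the determinant of the Hankel matrix (X_{i+j−1}), both viewed as polynomials in X_0,…,X_{2n−1}. Then for every 0 ≤ k ≤ 2n−1, the value at (h_0,…,h_{2n−1}) of the partial derivative of the quotient D_A/D with respect to X_k, namely ((∂D_A/∂X_k)·det H − (∂D/∂X_k)·det H_A)·(det H)^{−2}, equals (σ_{k−1}(H_A^{−1}) − σ_k(H^{−1}))·(det H_A)·(det H)^{−1}. -/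

import Mathlib

open Matrix

/-- The `k`-th anti-diagonal sum of an `n × n` matrix `M` (0-based indexing), for an
integer index `k` (so that `σ_{-1}(M) = 0` and `σ_{2n-1}(M) = 0` hold by convention):
`σ_k(M) = Σ_{i+j=k} M i j`. -/
def antiDiagSumZ {K : Type*} [CommRing K] {n : ℕ} (M : Matrix (Fin n) (Fin n) K)
    (k : ℤ) : K :=
  ∑ i : Fin n, ∑ j : Fin n, if ((i : ℕ) : ℤ) + ((j : ℕ) : ℤ) = k then M i j else 0

theorem derivation_prod_aux {R A ι : Type*} [CommRing R] [CommRing A] [Algebra R A]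
    [DecidableEq ι] (D : Derivation R A A) (s : Finset ι) (f : ι → A) :
    D (∏ i ∈ s, f i) = ∑ i ∈ s, (∏ j ∈ s.erase i, f j) * D (f i) := by
  induction s using Finset.induction_on with
  | empty => simp
  | insert a s ha ih =>
    rw [Finset.prod_insert ha, D.leibniz, ih, Finset.sum_insert ha, Finset.erase_insert ha,
      smul_eq_mul, smul_eq_mul, add_comm, Finset.mul_sum]
    congr 1
    refine Finset.sum_congr rfl fun i hi => ?_
    have hne : a ≠ i := fun e => ha (e ▸ hi)
    rw [Finset.erase_insert_of_ne hne,
      Finset.prod_insert (fun hc => ha (Finset.mem_of_mem_erase hc)), mul_assoc]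

theorem derivation_det_aux {R A ι : Type*} [CommRing R] [CommRing A] [Algebra R A]
    [DecidableEq ι] [Fintype ι] (D : Derivation R A A) (M : Matrix ι ι A) :
    D M.det = ∑ i, ∑ j, M.adjugate i j * D (M j i) := by
  have h1 : ∀ i, ∑ j, M.adjugate i j * D (M j i)
      = (M.updateCol i (fun j => D (M j i))).det := by
    intro i
    rw [← Matrix.cramer_apply, Matrix.cramer_eq_adjugate_mulVec]
    rfl
  simp_rw [h1, Matrix.det_apply', map_sum]
  rw [Finset.sum_comm]
  refine Finset.sum_congr rfl fun σ _ => ?_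
  rw [D.leibniz, derivation_prod_aux, D.map_intCast, smul_zero, add_zero, smul_eq_mul,
    Finset.mul_sum]
  refine Finset.sum_congr rfl fun i _ => ?_
  congr 1
  rw [← Finset.prod_erase_mul _ _ (Finset.mem_univ i)]
  congr 1
  · refine Finset.prod_congr rfl fun j hj => ?_
    rw [Matrix.updateCol_ne (Finset.ne_of_mem_erase hj)]
  · rw [Matrix.updateCol_self]

theorem eval_pderiv_hankel_aux {K : Type*} [Field K] {n : ℕ} (h : ℕ → K) (c : ℕ)
    (H : Matrix (Fin n) (Fin n) K)
    (hH : ∀ i j, H i j = h ((i : ℕ) + (j : ℕ) + c)) (hdet : H.det ≠ 0) (k : ℕ) :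
    MvPolynomial.eval h (MvPolynomial.pderiv k
      (Matrix.det (Matrix.of fun i j : Fin n =>
        (MvPolynomial.X ((i : ℕ) + (j : ℕ) + c) : MvPolynomial ℕ K))))
    = antiDiagSumZ H⁻¹ ((k : ℤ) - c) * H.det := by
  set M : Matrix (Fin n) (Fin n) (MvPolynomial ℕ K) := Matrix.of fun i j : Fin n =>
        (MvPolynomial.X ((i : ℕ) + (j : ℕ) + c) : MvPolynomial ℕ K) with hM
  have hev : (MvPolynomial.eval h).mapMatrix M = H := by
    ext i j
    simp [hM, hH]
  have hadj : ∀ i j, MvPolynomial.eval h (M.adjugate i j) = H⁻¹ i j * H.det := by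
    intro i j
    have h2 := congrFun (congrFun (RingHom.map_adjugate (MvPolynomial.eval h) M) i) j
    rw [hev] at h2
    rw [Matrix.inv_def, Ring.inverse_eq_inv', Matrix.smul_apply, smul_eq_mul, ← h2]
    simp only [RingHom.mapMatrix_apply, Matrix.map_apply]
    field_simp
  rw [derivation_det_aux]
  simp only [map_sum, map_mul, hadj, antiDiagSumZ, Finset.sum_mul]
  refine Finset.sum_congr rfl fun i _ => Finset.sum_congr rfl fun j _ => ?_
  have : M j i = MvPolynomial.X ((j : ℕ) + (i : ℕ) + c) := rfl
  rw [this, MvPolynomial.pderiv_X]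
  by_cases hc : ((i : ℕ) : ℤ) + ((j : ℕ) : ℤ) = (k : ℤ) - c
  · have : (j : ℕ) + (i : ℕ) + c = k := by omega
    simp [hc, this]
  · have : (j : ℕ) + (i : ℕ) + c ≠ k := by omega
    simp [hc, Pi.single_apply, this, Ne.symm this]

/-- Let `H = (h_{i+j-2})` and `H_A = (h_{i+j-1})` be non-singular, and let
`D` and `D_A` be the determinants of the generic Hankel matrices `(X_{i+j-2})` and
`(X_{i+j-1})` respectively (0-based: `(X_{i+j})` and `(X_{i+j+1})`).  Then for every
`0 ≤ k ≤ 2n-1`, the value at `(h_0, …, h_{2n-1})` of the partial derivative of the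
quotient `D_A/D` with respect to `X_k`, namely
`((∂D_A/∂X_k)·det H − (∂D/∂X_k)·det H_A)·(det H)⁻²`, equals
`(σ_{k-1}(H_A⁻¹) − σ_k(H⁻¹))·(det H_A)·(det H)⁻¹`. -/
theorem pderiv_det_quotient_eq_antiDiagSum_inv {K : Type*} [Field K] {n : ℕ}
    (hn : 1 ≤ n) (h : ℕ → K)
    (H HA : Matrix (Fin n) (Fin n) K)
    (hH : ∀ i j, H i j = h ((i : ℕ) + (j : ℕ)))
    (hHA : ∀ i j, HA i j = h ((i : ℕ) + (j : ℕ) + 1))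
    (hdetH : H.det ≠ 0) (hdetHA : HA.det ≠ 0)
    (k : ℕ) (hk : k ≤ 2 * n - 1) :
    (MvPolynomial.eval h
        (MvPolynomial.pderiv k
          (Matrix.det (Matrix.of fun i j : Fin n =>
            (MvPolynomial.X ((i : ℕ) + (j : ℕ) + 1) : MvPolynomial ℕ K)))) * H.det
      - MvPolynomial.eval h
          (MvPolynomial.pderiv k
            (Matrix.det (Matrix.of fun i j : Fin n =>
              (MvPolynomial.X ((i : ℕ) + (j : ℕ)) : MvPolynomial ℕ K)))) * HA.det)
      * (H.det ^ 2)⁻¹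
    = (antiDiagSumZ HA⁻¹ ((k : ℤ) - 1) - antiDiagSumZ H⁻¹ (k : ℤ))
        * HA.det * (H.det)⁻¹ := by
  have e1 := eval_pderiv_hankel_aux h 1 HA hHA hdetHA k
  have e0 := eval_pderiv_hankel_aux h 0 H hH hdetH k
  simp only [Nat.cast_one] at e1
  simp only [Nat.cast_zero, sub_zero, add_zero] at e0
  rw [e1, e0]
  field_simp
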